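/- Let S' = K[x_1,…,x_{n-1}], S = S'[x_n], and let V ⊆ U be square-free monomial ideals of S' with U ≠ V; set W = (V + x_n U)S. If depth_{S'} (S'/U) = depth_{S'} (S'/V) = depth_{S'} (U/V), then depth_S (S/W) = depth_{S'} (S'/U). -/

import Mathlib

open MvPolynomial

/-- The square-free monomial `∏ i ∈ T, X i` associated to a set `T` of variables. -/
noncomputable def sqMon (K : Type) [Field K] {n : ℕ} (T : Finset (Fin n)) :
    MvPolynomial (Fin n) K :=
  ∏ i ∈ T, X i

/-- `GenBySqMonOfDeg K P I` means: `I` is generated by square-free monomials whose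
degrees satisfy the predicate `P`. -/
def GenBySqMonOfDeg (K : Type) [Field K] {n : ℕ} (P : ℕ → Prop)
    (I : Ideal (MvPolynomial (Fin n) K)) : Prop :=
  ∃ G : Set (Finset (Fin n)), (∀ T ∈ G, P T.card) ∧ I = Ideal.span (sqMon K '' G)

/-- `rho K d I` : the number of square-free monomials of degree `d` belonging to `I`. -/
noncomputable def rho (K : Type) [Field K] {n : ℕ} (d : ℕ)
    (I : Ideal (MvPolynomial (Fin n) K)) : ℕ :=
  Set.ncard {T : Finset (Fin n) | T.card = d ∧ sqMon K T ∈ I}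

/-- The maximal graded ideal `(x_1, …, x_n)` of `K[x_1, …, x_n]`. -/
noncomputable def maxGraded (K : Type) [Field K] (n : ℕ) :
    Ideal (MvPolynomial (Fin n) K) :=
  Ideal.span (Set.range (X : Fin n → MvPolynomial (Fin n) K))

/-- The depth of the module `M` with respect to the ideal `I` : the supremum of the
lengths of `M`-regular sequences consisting of elements of `I`. -/
noncomputable def moduleDepth {R : Type} [CommRing R] (I : Ideal R)
    (M : Type) [AddCommGroup M] [Module R M] : ℕ∞ :=
  sSup {k : ℕ∞ | ∃ rs : List R, k = (rs.length : ℕ∞) ∧ (∀ r ∈ rs, r ∈ I) ∧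
    RingTheory.Sequence.IsRegular M rs}

/-- The `R`-module `I/J` (more precisely `I/(I ∩ J)`, which is `I/J` when `J ≤ I`). -/
noncomputable abbrev idealQuot {R : Type} [CommRing R] (I J : Ideal R) : Type :=
  ↥I ⧸ (Submodule.comap I.subtype (J : Submodule R R))

open RingTheory.Sequence CategoryTheory Abelian in
/-- Vanishing of Ext in degrees below k. -/
def ExtVan {R : Type} [CommRing R] (I : Ideal R) (M : Type) [AddCommGroup M] [Module R M]
    (k : ℕ) : Prop :=
  ∀ i < k, Subsingleton (Ext (ModuleCat.of R (R ⧸ I)) (ModuleCat.of R M) i)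

lemma exists_of_le_moduleDepth {R : Type} [CommRing R] (I : Ideal R)
    (M : Type) [AddCommGroup M] [Module R M] (k : ℕ) (hk : 0 < k)
    (h : (k : ℕ∞) ≤ moduleDepth I M) :
    ∃ rs : List R, k ≤ rs.length ∧ (∀ r ∈ rs, r ∈ I) ∧
      RingTheory.Sequence.IsRegular M rs := by
  have h' : ((k - 1 : ℕ) : ℕ∞) < moduleDepth I M :=
    lt_of_lt_of_le (by exact_mod_cast Nat.sub_lt hk one_pos) h
  obtain ⟨a, ⟨rs, rfl, h1, h2⟩, ha⟩ := lt_sSup_iff.mp h'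
  refine ⟨rs, ?_, h1, h2⟩
  have : k - 1 < rs.length := by exact_mod_cast ha
  omega

lemma supp_quot {R : Type} [CommRing R] (I : Ideal R) :
    Module.support R (ModuleCat.of R (R ⧸ I)) = PrimeSpectrum.zeroLocus I := by
  change Module.support R (R ⧸ I) = _
  rw [Module.support_eq_zeroLocus, Ideal.annihilator_quotient]

lemma le_moduleDepth_iff {R : Type} [CommRing R] [IsNoetherianRing R] (I : Ideal R)
    (M : Type) [AddCommGroup M] [Module R M] [Module.Finite R M]
    (hlt : I • (⊤ : Submodule R M) < ⊤) (k : ℕ) :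
    (k : ℕ∞) ≤ moduleDepth I M ↔ ExtVan I M k := by
  constructor
  · intro h i hi
    obtain ⟨rs, h1, h2, h3⟩ := exists_of_le_moduleDepth I M k (by omega) h
    exact ModuleCat.subsingleton_ext_of_exists_isRegular I (ModuleCat.of R (R ⧸ I))
      (supp_quot I).subset (ModuleCat.of R M) hlt rs h2 h3 i (by omega)
  · intro h
    obtain ⟨rs, h1, h2, h3⟩ := ModuleCat.exists_isRegular_of_exists_subsingleton_ext I k
      (ModuleCat.of R M) hlt (ModuleCat.of R (R ⧸ I)) (supp_quot I) h
    exact le_sSup ⟨rs, by rw [h1], h2, h3⟩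

open CategoryTheory Abelian in
lemma extVan_middle {R : Type} [CommRing R] (I : Ideal R)
    {A B C : Type} [AddCommGroup A] [Module R A] [AddCommGroup B] [Module R B]
    [AddCommGroup C] [Module R C] (f : A →ₗ[R] B) (g : B →ₗ[R] C)
    (hf : Function.Injective f) (hg : Function.Surjective g) (hfg : Function.Exact f g) (k : ℕ)
    (hA : ExtVan I A k) (hC : ExtVan I C k) : ExtVan I B k := by
  intro i hi
  have hS : (ModuleCat.shortComplexOfCompEqZero f g hfg.linearMap_comp_eq_zero).ShortExact :=
    ModuleCat.shortComplex_shortExact _ hfg hf hg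
  refine subsingleton_of_forall_eq 0 fun x => ?_
  have := hA i hi
  have := hC i hi
  obtain ⟨y, rfl⟩ := Ext.covariant_sequence_exact₂ _ hS x (this.elim _ _)
  rw [(hA i hi).elim y 0]
  simp

open CategoryTheory Abelian in
lemma extVan_left {R : Type} [CommRing R] (I : Ideal R)
    {A B C : Type} [AddCommGroup A] [Module R A] [AddCommGroup B] [Module R B]
    [AddCommGroup C] [Module R C] (f : A →ₗ[R] B) (g : B →ₗ[R] C)
    (hf : Function.Injective f) (hg : Function.Surjective g) (hfg : Function.Exact f g) (k : ℕ)
    (hB : ExtVan I B (k + 1)) (hC : ExtVan I C k) : ExtVan I A (k + 1) := by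
  intro i hi
  have hS : (ModuleCat.shortComplexOfCompEqZero f g hfg.linearMap_comp_eq_zero).ShortExact :=
    ModuleCat.shortComplex_shortExact _ hfg hf hg
  refine subsingleton_of_forall_eq 0 fun x => ?_
  cases i with
  | zero =>
    have := hS.mono_f
    exact Ext.postcomp_mk₀_injective_of_mono _
      (ModuleCat.shortComplexOfCompEqZero f g hfg.linearMap_comp_eq_zero).f
        ((hB 0 hi).elim _ _)
  | succ i =>
    obtain ⟨y, rfl⟩ := Ext.covariant_sequence_exact₁ _ hS x ((hB _ hi).elim _ _) rfl
    rw [(hC i (by omega)).elim y 0]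
    simp

lemma exists_addEquiv {R R' : Type} [CommRing R] [CommRing R'] (p : R →+* R')
    {A B : Type} [AddCommGroup A] [Module R A] [AddCommGroup B] [Module R' B]
    (N : Submodule R A) (f : A →ₛₗ[p] B) (hf : Function.Surjective f)
    (hN : ∀ a, f a = 0 ↔ a ∈ N) :
    ∃ e : (A ⧸ N) ≃+ B, ∀ (r : R) x, e (r • x) = p r • e x := by
  have hker : LinearMap.ker f = N := by ext a; simp [hN]
  let F := N.liftQ f hker.ge
  have hF : Function.Bijective F := by
    constructor
    · rw [← LinearMap.ker_eq_bot]
      exact Submodule.ker_liftQ_eq_bot _ _ _ hker.le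
    · intro b
      obtain ⟨a, rfl⟩ := hf b
      exact ⟨N.mkQ a, by simp [F]⟩
  exact ⟨AddEquiv.ofBijective F.toAddMonoidHom hF, fun r x => F.map_smulₛₗ r x⟩

open RingTheory.Sequence in
lemma regular_down {R R' : Type} [CommRing R] [CommRing R'] (p : R →+* R')
    {A B : Type} [AddCommGroup A] [Module R A] [AddCommGroup B] [Module R' B]
    (e : A ≃+ B) (he : ∀ (r : R) x, e (r • x) = p r • e x) (rs : List R) :
    IsRegular A rs ↔ IsRegular B (rs.map p) :=
  AddEquiv.isRegular_congr (e := e) <| List.forall₂_map_right_iff.mpr <|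
    List.forall₂_same.mpr fun r _ x => he r x

open RingTheory.Sequence in
lemma regular_up {R R' : Type} [CommRing R] [CommRing R'] (p : R →+* R') (q : R' →+* R)
    (hpq : ∀ x, p (q x) = x)
    {A B : Type} [AddCommGroup A] [Module R A] [AddCommGroup B] [Module R' B]
    (e : A ≃+ B) (he : ∀ (r : R) x, e (r • x) = p r • e x) (rs : List R') :
    IsRegular A (rs.map q) ↔ IsRegular B rs := by
  rw [regular_down p e he]
  simp [Function.comp_def, hpq]

lemma depth_congr {R R' : Type} [CommRing R] [CommRing R'] (p : R →+* R') (q : R' →+* R)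
    (hpq : ∀ x, p (q x) = x) (I : Ideal R) (I' : Ideal R')
    (hp : ∀ x ∈ I, p x ∈ I') (hq : ∀ x ∈ I', q x ∈ I)
    {A B : Type} [AddCommGroup A] [Module R A] [AddCommGroup B] [Module R' B]
    (e : A ≃+ B) (he : ∀ (r : R) x, e (r • x) = p r • e x) :
    moduleDepth I A = moduleDepth I' B := by
  unfold moduleDepth
  congr 1
  ext k
  constructor
  · rintro ⟨rs, rfl, h1, h2⟩
    refine ⟨rs.map p, by simp, ?_, (regular_down p e he rs).1 h2⟩
    simp only [List.mem_map]
    rintro _ ⟨r, hr, rfl⟩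
    exact hp _ (h1 r hr)
  · rintro ⟨rs, rfl, h1, h2⟩
    refine ⟨rs.map q, by simp, ?_, (regular_up p q hpq e he rs).2 h2⟩
    simp only [List.mem_map]
    rintro _ ⟨r, hr, rfl⟩
    exact hq _ (h1 r hr)

/-- The projection killing the last variable. -/
noncomputable def prj (K : Type) [Field K] (n : ℕ) :
    MvPolynomial (Fin (n + 1)) K →+* MvPolynomial (Fin n) K :=
  (aeval (Fin.lastCases 0 X : Fin (n + 1) → MvPolynomial (Fin n) K)).toRingHom

/-- The inclusion. -/
noncomputable def inc (K : Type) [Field K] (n : ℕ) :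
    MvPolynomial (Fin n) K →+* MvPolynomial (Fin (n + 1)) K :=
  (rename Fin.castSucc : MvPolynomial (Fin n) K →ₐ[K] MvPolynomial (Fin (n + 1)) K).toRingHom

lemma prj_inc (K : Type) [Field K] (n : ℕ) (x) : prj K n (inc K n x) = x := by
  change aeval (Fin.lastCases 0 X : Fin (n + 1) → MvPolynomial (Fin n) K)
    (rename Fin.castSucc x) = x
  rw [aeval_rename]
  have : (Fin.lastCases 0 X : Fin (n + 1) → MvPolynomial (Fin n) K) ∘ Fin.castSucc = X := by
    ext1 i; simp
  rw [this, aeval_X_left_apply]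

lemma prj_last (K : Type) [Field K] (n : ℕ) : prj K n (X (Fin.last n)) = 0 := by
  simp [prj]

lemma sub_inc_prj (K : Type) [Field K] (n : ℕ) (s) :
    s - inc K n (prj K n s) ∈ Ideal.span {(X (Fin.last n) : MvPolynomial (Fin (n + 1)) K)} := by
  rw [← Ideal.Quotient.eq]
  change Ideal.Quotient.mkₐ K _ s = ((Ideal.Quotient.mkₐ K _).comp ((rename Fin.castSucc).comp
    (aeval (Fin.lastCases 0 X : Fin (n + 1) → MvPolynomial (Fin n) K)))) s
  congr 1
  ext i
  induction i using Fin.lastCases with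
  | last =>
    simp [Ideal.Quotient.eq_zero_iff_mem, Ideal.mem_span_singleton_self]
  | cast i => simp

lemma prj_max (K : Type) [Field K] (n : ℕ) : ∀ x ∈ maxGraded K (n + 1), prj K n x ∈ maxGraded K n := by
  intro x hx
  change x ∈ Ideal.comap (prj K n) (maxGraded K n)
  revert x
  change maxGraded K (n + 1) ≤ _
  unfold maxGraded
  rw [Ideal.span_le]
  rintro _ ⟨i, rfl⟩
  induction i using Fin.lastCases with
  | last => simp [prj]
  | cast i => 
    simp only [SetLike.mem_coe, Ideal.mem_comap]
    have : prj K n (X i.castSucc) = X i := by simp [prj]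
    rw [this]
    exact Ideal.subset_span (Set.mem_range_self i)

lemma inc_max (K : Type) [Field K] (n : ℕ) : ∀ x ∈ maxGraded K n, inc K n x ∈ maxGraded K (n + 1) := by
  intro x hx
  change x ∈ Ideal.comap (inc K n) (maxGraded K (n + 1))
  revert x
  change maxGraded K n ≤ _
  unfold maxGraded
  rw [Ideal.span_le]
  rintro _ ⟨i, rfl⟩
  simp only [SetLike.mem_coe, Ideal.mem_comap]
  have : inc K n (X i) = X i.castSucc := by simp [inc]
  rw [this]
  exact Ideal.subset_span (Set.mem_range_self _)

lemma max_coeff (K : Type) [Field K] (n : ℕ) : ∀ x ∈ maxGraded K n, constantCoeff x = 0 := by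
  intro x hx
  change x ∈ RingHom.ker constantCoeff
  revert x
  change maxGraded K n ≤ _
  unfold maxGraded
  rw [Ideal.span_le]
  rintro _ ⟨i, rfl⟩
  simp

lemma maxGraded_ne_top (K : Type) [Field K] (n : ℕ) : maxGraded K n ≠ ⊤ := by
  intro h
  have := max_coeff K n 1 (h ▸ trivial)
  simp at this

lemma sqMon_eq (K : Type) [Field K] {n : ℕ} (T : Finset (Fin n)) :
    sqMon K T = monomial (∑ i ∈ T, Finsupp.single i 1) 1 := by
  simp [sqMon, monomial_finsupp_sum_index, X, monomial_sum_one]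

lemma le_max_of_ne_top (K : Type) [Field K] {n : ℕ} (I : Ideal (MvPolynomial (Fin n) K))
    (hI : GenBySqMonOfDeg K (fun _ => True) I) (h : I ≠ ⊤) : I ≤ maxGraded K n := by
  obtain ⟨G, -, rfl⟩ := hI
  rw [Ideal.span_le]
  rintro _ ⟨T, hT, rfl⟩
  rcases T.eq_empty_or_nonempty with rfl | ⟨i, hi⟩
  · exact absurd ((Ideal.eq_top_iff_one _).2 (Ideal.subset_span
      ((Set.mem_image _ _ _).2 ⟨∅, hT, by simp [sqMon]⟩))) h
  · exact Ideal.mem_of_dvd _ (Finset.dvd_prod_of_mem (X : Fin n → MvPolynomial (Fin n) K) hi)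
      (Ideal.subset_span ⟨i, rfl⟩)

lemma smul_lt_of_le {R : Type} [CommRing R] (m I : Ideal R) (hm : m ≠ ⊤) (hI : I ≤ m) :
    m • (⊤ : Submodule R (R ⧸ I)) < ⊤ := by
  rw [lt_top_iff_ne_top]
  intro h
  apply hm
  have h2 : m • (⊤ : Submodule R (R ⧸ I)) ≤ Submodule.map I.mkQ m := by
    rw [Submodule.smul_le]
    intro r hr x _
    obtain ⟨x, rfl⟩ := Submodule.mkQ_surjective _ x
    exact ⟨r * x, m.mul_mem_right _ hr, rfl⟩
  rw [h, top_le_iff] at h2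
  have h3 : Submodule.mkQ I 1 ∈ Submodule.map I.mkQ m := h2 ▸ trivial
  obtain ⟨y, hy, hy'⟩ := h3
  rw [Ideal.eq_top_iff_one]
  have : y - 1 ∈ I := (Submodule.Quotient.eq I).1 hy'
  have := m.sub_mem hy (hI this)
  simpa using this

lemma last_regular (K : Type) [Field K] {n : ℕ} (U : Ideal (MvPolynomial (Fin n) K))
    (hU : GenBySqMonOfDeg K (fun _ => True) U) :
    IsSMulRegular (MvPolynomial (Fin (n + 1)) K ⧸ Ideal.map (inc K n) U)
      (X (Fin.last n) : MvPolynomial (Fin (n + 1)) K) := by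
  obtain ⟨G, -, rfl⟩ := hU
  rw [isSMulRegular_quotient_iff_mem_of_smul_mem]
  have key : Ideal.map (inc K n) (Ideal.span (sqMon K '' G)) =
      Ideal.span ((fun s => monomial s (1 : K)) ''
        ((fun T : Finset (Fin n) => ∑ i ∈ T, Finsupp.single i.castSucc 1) '' G)) := by
    rw [Ideal.map_span, Set.image_image, Set.image_image]
    congr 1
    apply Set.image_congr
    intro T _
    simp [sqMon, inc, monomial_sum_one, X, rename_monomial]
  rw [key]
  intro x hx
  rw [mem_ideal_span_monomial_image] at hx ⊢
  intro a ha
  obtain ⟨_, ⟨T, hT, rfl⟩, h⟩ := hx (Finsupp.single (Fin.last n) 1 + a) (by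
    rw [mem_support_iff] at ha ⊢
    rwa [smul_eq_mul, coeff_X_mul])
  refine ⟨_, ⟨T, hT, rfl⟩, fun j => ?_⟩
  induction j using Fin.lastCases with
  | last =>
    have : (∑ i ∈ T, Finsupp.single i.castSucc 1 : Fin (n+1) →₀ ℕ) (Fin.last n) = 0 := by
      simp [Finsupp.finsetSum_apply, Finsupp.single_apply, (Fin.castSucc_lt_last _).ne]
    simp only [this, zero_le]
  | cast j =>
    have := h j.castSucc
    rw [Finsupp.add_apply, Finsupp.single_eq_of_ne (Fin.castSucc_lt_last _).ne] at this
    simpa using this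

lemma mem_of_mul (K : Type) [Field K] {n : ℕ} (V : Ideal (MvPolynomial (Fin n) K))
    (hV : GenBySqMonOfDeg K (fun _ => True) V) (T : Finset (Fin n)) (r : MvPolynomial (Fin n) K)
    (hr : constantCoeff r ≠ 0) (h : r * sqMon K T ∈ V) : sqMon K T ∈ V := by
  obtain ⟨G, -, rfl⟩ := hV
  have key : Ideal.span (sqMon K '' G) =
      Ideal.span ((fun s => monomial s (1 : K)) ''
        ((fun T : Finset (Fin n) => ∑ i ∈ T, Finsupp.single i 1) '' G)) := by
    rw [Set.image_image]
    simp_rw [← sqMon_eq]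
  rw [key, mem_ideal_span_monomial_image] at h ⊢
  rw [sqMon_eq] at h ⊢
  intro a ha
  have : a = ∑ i ∈ T, Finsupp.single i 1 := by
    have := support_monomial_subset ha
    simpa using this
  subst this
  apply h
  rw [mem_support_iff]
  have := coeff_mul_monomial 0 (∑ i ∈ T, Finsupp.single i 1 : Fin n →₀ ℕ) (1 : K) r
  rw [zero_add] at this
  rw [this, mul_one]
  exact hr

lemma prj_mem (K : Type) [Field K] {n : ℕ} (U : Ideal (MvPolynomial (Fin n) K)) :
    Ideal.map (inc K n) U ≤ Ideal.comap (prj K n) U := by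
  rw [Ideal.map_le_iff_le_comap]
  intro x hx
  simpa [prj_inc] using hx

lemma sub_mem_mul (K : Type) [Field K] {n : ℕ} (U : Ideal (MvPolynomial (Fin n) K)) :
    ∀ u ∈ Ideal.map (inc K n) U, u - inc K n (prj K n u) ∈
      Ideal.span {(X (Fin.last n) : MvPolynomial (Fin (n + 1)) K)} * Ideal.map (inc K n) U := by
  intro u hu
  induction hu using Submodule.span_induction with
  | mem x hx =>
    obtain ⟨y, hy, rfl⟩ := hx
    rw [prj_inc, sub_self]
    exact Submodule.zero_mem _
  | zero => simp
  | add x y _ _ hx hy =>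
    have := Ideal.add_mem _ hx hy
    rw [map_add, map_add]
    convert this using 1
    ring
  | smul a x hx' hx =>
    have h1 := Ideal.mul_mem_mul (sub_inc_prj K n a) (show x ∈ Ideal.map (inc K n) U from hx')
    have h2 := Ideal.mul_mem_left _ (inc K n (prj K n a)) hx
    have := Ideal.add_mem _ h1 h2
    rw [smul_eq_mul, map_mul, map_mul]
    convert this using 1
    ring

/-- The ideal `W`. -/
noncomputable def WW (K : Type) [Field K] {n : ℕ} (U V : Ideal (MvPolynomial (Fin n) K)) :
    Ideal (MvPolynomial (Fin (n + 1)) K) :=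
  Ideal.map (inc K n) V + Ideal.span {(X (Fin.last n) : MvPolynomial (Fin (n + 1)) K)} *
        Ideal.map (inc K n) U

lemma WW_prj (K : Type) [Field K] {n : ℕ} (U V : Ideal (MvPolynomial (Fin n) K)) :
    WW K U V ≤ Ideal.comap (prj K n) V := by
  refine sup_le (prj_mem K V) (Ideal.mul_le_left.trans ?_)
  rw [Ideal.span_singleton_le_iff_mem, Ideal.mem_comap, prj_last]
  exact V.zero_mem

lemma exists_e (K : Type) [Field K] {n : ℕ} (U V : Ideal (MvPolynomial (Fin n) K)) :
    ∃ e : idealQuot (Ideal.map (inc K n) U) (WW K U V) ≃+ idealQuot U V,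
      ∀ r x, e (r • x) = prj K n r • e x := by
  let f : Ideal.map (inc K n) U →ₛₗ[prj K n] idealQuot U V :=
    { toFun := fun u => Submodule.Quotient.mk ⟨prj K n u.1, prj_mem K U u.2⟩
      map_add' := fun a b => by
        rw [← Submodule.Quotient.mk_add]
        congr 1
        ext1
        simp
      map_smul' := fun a b => by
        rw [← Submodule.Quotient.mk_smul]
        congr 1
        ext1
        simp }
  apply exists_addEquiv (prj K n) _ f
  · intro y
    obtain ⟨⟨y, hy⟩, rfl⟩ := Submodule.mkQ_surjective _ y
    refine ⟨⟨inc K n y, Ideal.mem_map_of_mem _ hy⟩, ?_⟩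
    change Submodule.Quotient.mk _ = Submodule.Quotient.mk _
    congr 1
    ext1
    exact prj_inc K n y
  · rintro ⟨u, hu⟩
    change Submodule.Quotient.mk _ = 0 ↔ u ∈ WW K U V
    rw [Submodule.Quotient.mk_eq_zero]
    change prj K n u ∈ V ↔ _
    constructor
    · intro h
      have h1 := sub_mem_mul K U u hu
      have h2 := Ideal.mem_map_of_mem (inc K n) h
      rw [← add_sub_cancel (inc K n (prj K n u)) u]
      exact Submodule.add_mem_sup h2 h1
    · exact fun h => WW_prj K U V h

open Pointwise in
lemma exists_e' (K : Type) [Field K] {n : ℕ} (U : Ideal (MvPolynomial (Fin n) K)) :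
    ∃ e : QuotSMulTop (X (Fin.last n) : MvPolynomial (Fin (n + 1)) K)
      (MvPolynomial (Fin (n + 1)) K ⧸ Ideal.map (inc K n) U) ≃+ (MvPolynomial (Fin n) K ⧸ U),
      ∀ (r : MvPolynomial (Fin (n + 1)) K) x, e (r • x) = prj K n r • e x := by
  let f : (MvPolynomial (Fin (n + 1)) K ⧸ Ideal.map (inc K n) U) →ₛₗ[prj K n]
      (MvPolynomial (Fin n) K ⧸ U) :=
    Submodule.mapQ _ _ (prj K n).toSemilinearMap (prj_mem K U)
  apply exists_addEquiv (prj K n) _ f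
  · intro y
    obtain ⟨y, rfl⟩ := Submodule.mkQ_surjective _ y
    refine ⟨Submodule.Quotient.mk (inc K n y), ?_⟩
    change Submodule.Quotient.mk (prj K n (inc K n y)) = Submodule.Quotient.mk y
    rw [prj_inc]
  · intro a
    obtain ⟨a, rfl⟩ := Submodule.mkQ_surjective _ a
    rw [Submodule.mem_smul_pointwise_iff_exists]
    change Submodule.Quotient.mk (prj K n a) = 0 ↔ _
    rw [Submodule.Quotient.mk_eq_zero]
    constructor
    · intro h
      obtain ⟨b, hb⟩ := Ideal.mem_span_singleton.1 (sub_inc_prj K n a)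
      refine ⟨Submodule.mkQ _ b, trivial, ?_⟩
      rw [← map_smul, smul_eq_mul, ← hb]
      have h2 := Ideal.mem_map_of_mem (inc K n) h
      rw [map_sub]
      rw [show Submodule.mkQ (Ideal.map (inc K n) U) (inc K n (prj K n a)) = 0 from
        (Submodule.Quotient.mk_eq_zero _).2 h2, sub_zero]
    · rintro ⟨b, -, hb⟩
      obtain ⟨b, rfl⟩ := Submodule.mkQ_surjective _ b
      rw [← map_smul] at hb
      have := (Submodule.Quotient.eq (Ideal.map (inc K n) U)).1 hb
      have := prj_mem K U this
      simpa [prj_last] using this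

lemma le_depth_cons {R : Type} [CommRing R] (I : Ideal R) (M : Type) [AddCommGroup M] [Module R M]
    (x : R) (rs : List R) (k : ℕ) (hk : k ≤ rs.length) (hx : x ∈ I) (hrs : ∀ r ∈ rs, r ∈ I)
    (h1 : IsSMulRegular M x) (h2 : RingTheory.Sequence.IsRegular (QuotSMulTop x M) rs) :
    (k : ℕ∞) ≤ moduleDepth I M := by
  have h7 : ((x :: rs).length : ℕ∞) ≤ moduleDepth I M :=
    le_sSup ⟨_, rfl, by simpa using ⟨hx, hrs⟩, RingTheory.Sequence.IsRegular.cons h1 h2⟩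
  refine le_trans ?_ h7
  rw [List.length_cons]
  exact_mod_cast (by omega : k ≤ rs.length + 1)

lemma extVan_US (K : Type) [Field K] {n : ℕ} (U : Ideal (MvPolynomial (Fin n) K))
    (hU : GenBySqMonOfDeg K (fun _ => True) U) (k : ℕ)
    (h : (k : ℕ∞) ≤ moduleDepth (maxGraded K n) (MvPolynomial (Fin n) K ⧸ U)) :
    ExtVan (maxGraded K (n + 1)) (MvPolynomial (Fin (n + 1)) K ⧸ Ideal.map (inc K n) U) k := by
  by_cases hk : 0 < k
  swap
  · intro i hi
    exact absurd (lt_of_le_of_lt (Nat.zero_le i) hi) hk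
  obtain ⟨rs, h1, h2, h3⟩ := exists_of_le_moduleDepth _ _ k hk h
  have hne : U ≠ ⊤ := by
    have := h3.nontrivial
    exact Ideal.Quotient.nontrivial_iff.1 this
  have hle : Ideal.map (inc K n) U ≤ maxGraded K (n + 1) := by
    rw [Ideal.map_le_iff_le_comap]
    exact fun x hx => inc_max K n x (le_max_of_ne_top K U hU hne hx)
  have hiff := le_moduleDepth_iff (maxGraded K (n + 1))
    (MvPolynomial (Fin (n + 1)) K ⧸ Ideal.map (inc K n) U)
    (smul_lt_of_le _ _ (maxGraded_ne_top K _) hle) k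
  refine hiff.1 ?_
  obtain ⟨e, he⟩ := exists_e' K U
  have h4 := (regular_up (prj K n) (inc K n) (prj_inc K n) e he rs).2 h3
  have h5 : ∀ r ∈ rs.map (inc K n), r ∈ maxGraded K (n + 1) := by
    intro r hr
    obtain ⟨r, hr2, rfl⟩ := List.mem_map.1 hr
    exact inc_max K n r (h2 r hr2)
  exact le_depth_cons _ _ (X (Fin.last n)) (rs.map (inc K n)) k (by rwa [List.length_map])
    (Ideal.subset_span (Set.mem_range_self _)) h5 (last_regular K U hU) h4

lemma smul_lt_Q (K : Type) [Field K] {n : ℕ} (U V : Ideal (MvPolynomial (Fin n) K))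
    (hU : GenBySqMonOfDeg K (fun _ => True) U)
    (hV : GenBySqMonOfDeg K (fun _ => True) V)
    (hVU : V ≤ U) (hne : U ≠ V) :
    maxGraded K (n + 1) • (⊤ : Submodule (MvPolynomial (Fin (n + 1)) K)
      (idealQuot (Ideal.map (inc K n) U) (WW K U V))) < ⊤ := by
  rw [lt_top_iff_ne_top]
  intro h
  apply hne
  refine le_antisymm ?_ hVU
  obtain ⟨r, hr, hr'⟩ := Submodule.exists_sub_one_mem_and_smul_eq_zero_of_fg_of_le_smul
    (maxGraded K (n + 1)) _ (Module.Finite.fg_top) h.ge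
  obtain ⟨G, -, rfl⟩ := hU
  rw [Ideal.span_le]
  rintro _ ⟨T, hT, rfl⟩
  have hTU : sqMon K T ∈ Ideal.span (sqMon K '' G) := Ideal.subset_span ⟨T, hT, rfl⟩
  have h1 := hr' (Submodule.Quotient.mk ⟨inc K n (sqMon K T), Ideal.mem_map_of_mem _ hTU⟩) trivial
  rw [← Submodule.Quotient.mk_smul, Submodule.Quotient.mk_eq_zero] at h1
  have h2 : r * inc K n (sqMon K T) ∈ WW K _ V := h1
  have h3 := WW_prj K _ V h2
  rw [Ideal.mem_comap, map_mul, prj_inc] at h3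
  refine mem_of_mul K V hV T _ ?_ h3
  have h4 := max_coeff K n _ (prj_max K n _ hr)
  rw [map_sub, map_sub, map_one, map_one, sub_eq_zero] at h4
  rw [h4]
  exact one_ne_zero

lemma nat_le_iff_eq {a b : ℕ∞} (h : ∀ k : ℕ, (k : ℕ∞) ≤ a ↔ (k : ℕ∞) ≤ b) : a = b := by
  apply le_antisymm
  · exact ENat.forall_natCast_le_iff_le.1 fun k hk => (h k).1 hk
  · exact ENat.forall_natCast_le_iff_le.1 fun k hk => (h k).2 hk

/-- Lemma 3.1.  Here `S' = K[x_1,…,x_n]` is embedded in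
`S = S'[x_{n+1}] = K[x_1,…,x_{n+1}]` via `rename Fin.castSucc`, and the last
variable `X (Fin.last n)` plays the role of `x_n` of the paper. -/
theorem stmt_12 (n : ℕ) (K : Type) [Field K]
    (U V : Ideal (MvPolynomial (Fin n) K))
    (hU : GenBySqMonOfDeg K (fun _ => True) U)
    (hV : GenBySqMonOfDeg K (fun _ => True) V)
    (hVU : V ≤ U) (hne : U ≠ V)
    (W : Ideal (MvPolynomial (Fin (n + 1)) K))
    (hW : W = Ideal.map (rename Fin.castSucc) V +
      Ideal.span {(X (Fin.last n) : MvPolynomial (Fin (n + 1)) K)} *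
        Ideal.map (rename Fin.castSucc) U)
    (h1 : moduleDepth (maxGraded K n) (MvPolynomial (Fin n) K ⧸ U) =
      moduleDepth (maxGraded K n) (MvPolynomial (Fin n) K ⧸ V))
    (h2 : moduleDepth (maxGraded K n) (MvPolynomial (Fin n) K ⧸ V) =
      moduleDepth (maxGraded K n) (idealQuot U V)) :
    moduleDepth (maxGraded K (n + 1)) (MvPolynomial (Fin (n + 1)) K ⧸ W) =
      moduleDepth (maxGraded K n) (MvPolynomial (Fin n) K ⧸ U) := by
  have hWW : W = WW K U V := hW
  clear hW
  subst hWW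
  have hVt : V ≠ ⊤ := by
    rintro rfl
    exact hne (top_le_iff.1 hVU)
  have hWm : WW K U V ≤ maxGraded K (n + 1) := by
    refine sup_le ?_ (Ideal.mul_le_left.trans ?_)
    · rw [Ideal.map_le_iff_le_comap]
      exact fun x hx => inc_max K n x (le_max_of_ne_top K V hV hVt hx)
    · rw [Ideal.span_singleton_le_iff_mem]
      exact Ideal.subset_span ⟨_, rfl⟩
  have hWU : WW K U V ≤ Ideal.map (inc K n) U :=
    sup_le (Ideal.map_mono hVU) Ideal.mul_le_right
  obtain ⟨e, he⟩ := exists_e K U V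
  have hQ : moduleDepth (maxGraded K (n + 1)) (idealQuot (Ideal.map (inc K n) U) (WW K U V)) =
      moduleDepth (maxGraded K n) (idealQuot U V) :=
    depth_congr (prj K n) (inc K n) (prj_inc K n) _ _ (prj_max K n) (inc_max K n) e he
  have hd := h1.trans h2
  rw [← hQ] at hd
  have hQiff := le_moduleDepth_iff (maxGraded K (n + 1))
    (idealQuot (Ideal.map (inc K n) U) (WW K U V)) (smul_lt_Q K U V hU hV hVU hne)
  have hWiff := le_moduleDepth_iff (maxGraded K (n + 1))
    (MvPolynomial (Fin (n + 1)) K ⧸ WW K U V) (smul_lt_of_le _ _ (maxGraded_ne_top K _) hWm)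
  have hUS := extVan_US K U hU
  rw [hd] at hUS ⊢
  let f : idealQuot (Ideal.map (inc K n) U) (WW K U V) →ₗ[MvPolynomial (Fin (n + 1)) K]
      (MvPolynomial (Fin (n + 1)) K ⧸ WW K U V) :=
    Submodule.mapQ _ _ (Submodule.subtype (Ideal.map (inc K n) U)) le_rfl
  let g : (MvPolynomial (Fin (n + 1)) K ⧸ WW K U V) →ₗ[MvPolynomial (Fin (n + 1)) K]
      (MvPolynomial (Fin (n + 1)) K ⧸ Ideal.map (inc K n) U) :=
    Submodule.mapQ _ _ LinearMap.id hWU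
  have hf : Function.Injective f := by
    rw [← LinearMap.ker_eq_bot]
    exact Submodule.ker_liftQ_eq_bot _ _ _ (by rw [LinearMap.ker_comp, Submodule.ker_mkQ])
  have hg : Function.Surjective g := by
    intro y
    obtain ⟨y, rfl⟩ := Submodule.mkQ_surjective _ y
    exact ⟨Submodule.mkQ _ y, rfl⟩
  have hfg : Function.Exact f g := by
    intro y
    obtain ⟨y, rfl⟩ := Submodule.mkQ_surjective _ y
    change Submodule.Quotient.mk y = 0 ↔ _
    rw [Submodule.Quotient.mk_eq_zero]
    constructor
    · intro h
      exact ⟨Submodule.Quotient.mk ⟨y, h⟩, rfl⟩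
    · rintro ⟨z, hz⟩
      obtain ⟨⟨z, hz'⟩, rfl⟩ := Submodule.mkQ_surjective _ z
      have := (Submodule.Quotient.eq (WW K U V)).1 hz
      have := Ideal.sub_mem _ hz' (hWU this)
      simpa using this
  apply nat_le_iff_eq
  intro k
  constructor
  · induction k with
    | zero => simp
    | succ k ih =>
      intro h
      have hk := ih (le_trans (by exact_mod_cast Nat.le_succ k) h)
      rw [hWiff] at h
      rw [hQiff]
      exact extVan_left _ f g hf hg hfg k h (hUS k hk)
  · intro h
    rw [hWiff]
    exact extVan_middle _ f g hf hg hfg k ((hQiff k).1 h) (hUS k h)
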